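/- Let T_a be the random trigonometric polynomial of degree n with a ~ N(0, I_{2n+1}), N = 2n+1. Then E[‖T_a‖_∞] ≍ √(N log N), i.e., there exist absolute constants c, C > 0 with c√(N log N) ≤ E[‖T_a‖_∞] ≤ C√(N log N) for N ≥ 3. -/

import Mathlib

open MeasureTheory ProbabilityTheory Real

/-- The random trigonometric polynomial
`T_a(x) = a₁ + ∑_{k=1}^n (a_{2k} √2 cos kx + a_{2k+1} √2 sin kx)`. -/
noncomputable def trigPoly (n : ℕ) (a : Fin (2 * n + 1) → ℝ) (x : ℝ) : ℝ :=
  a ⟨0, by omega⟩ + ∑ k : Fin n,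
    (a ⟨2 * k.1 + 1, by have := k.2; omega⟩ * Real.sqrt 2 * Real.cos ((k.1 + 1 : ℝ) * x)
      + a ⟨2 * k.1 + 2, by have := k.2; omega⟩ * Real.sqrt 2 * Real.sin ((k.1 + 1 : ℝ) * x))

/-- The sup norm of a function on `[0, 2π]`. -/
noncomputable def supNorm (f : ℝ → ℝ) : ℝ :=
  ⨆ x : Set.Icc (0 : ℝ) (2 * π), |f x.1|

/-!
Write `N = 2n + 1`. For the upper bound, `T_a` is Lipschitz with constant at most `N² ‖a‖_∞`, so up
to an error `2π ‖a‖_∞` its sup norm is the maximum of `|T_a|` over the `N² + 1` points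
`2πj / N²`. The values of `T_a` are sub-Gaussian with variance proxy `N`, and the expected maximum
of `m` such variables is at most `√(2 N log (2m))`.

For the lower bound, the covariance of `T_a(x)` and `T_a(y)` is the Dirichlet kernel at `x - y`, so
the values of `T_a` at the nodes `2πj / N` are independent `N(0, N)` variables. Each exceeds
`√(N log N)` in absolute value with probability at least `κ / N`, hence they all stay below it with
probability at most `(1 - κ / N) ^ N ≤ exp (-κ)`.
-/

section SupNorm

lemma supNorm_nonneg (f : ℝ → ℝ) : 0 ≤ supNorm f :=
  Real.iSup_nonneg fun _ => abs_nonneg _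

lemma supNorm_le {f : ℝ → ℝ} {B : ℝ} (hf : ∀ x ∈ Set.Icc 0 (2 * π), |f x| ≤ B) :
    supNorm f ≤ B :=
  have : Nonempty (Set.Icc 0 (2 * π)) := ⟨⟨0, le_rfl, two_pi_pos.le⟩⟩
  ciSup_le fun x => hf x x.2

lemma bddAbove_range_abs_Icc {f : ℝ → ℝ} {a b : ℝ} (hf : ContinuousOn f (Set.Icc a b)) :
    BddAbove (Set.range fun x : Set.Icc a b => |f x|) := by
  rw [← Set.image_eq_range fun x => |f x|]
  exact isCompact_Icc.bddAbove_image hf.abs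

lemma abs_le_supNorm {f : ℝ → ℝ} (hf : ContinuousOn f (Set.Icc 0 (2 * π))) {x : ℝ}
    (hx : x ∈ Set.Icc 0 (2 * π)) : |f x| ≤ supNorm f :=
  le_ciSup (bddAbove_range_abs_Icc hf) ⟨x, hx⟩

lemma lowerSemicontinuous_supNorm {α : Type*} [TopologicalSpace α] {f : α → ℝ → ℝ}
    (hfa : ∀ a, ContinuousOn (f a) (Set.Icc 0 (2 * π)))
    (hfx : ∀ x ∈ Set.Icc 0 (2 * π), Continuous fun a => f a x) :
    LowerSemicontinuous fun a => supNorm (f a) :=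
  lowerSemicontinuous_ciSup (fun a => bddAbove_range_abs_Icc (hfa a))
    fun x => (hfx x x.2).abs.lowerSemicontinuous

lemma mul_div_mem_Icc {b : ℝ} (hb : 0 ≤ b) {M j : ℕ} (hj : j ≤ M) :
    b * j / M ∈ Set.Icc 0 b := by
  refine ⟨by positivity, div_le_of_le_mul₀ (by positivity) hb ?_⟩
  gcongr

lemma exists_abs_sub_mul_div_le {b x : ℝ} (hx : x ∈ Set.Icc 0 b) {M : ℕ} (hM : M ≠ 0) :
    ∃ j : Fin (M + 1), |x - b * j / M| ≤ b / M := by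
  rcases (hx.1.trans hx.2).eq_or_lt with rfl | hb
  · exact ⟨0, by simp [le_antisymm hx.2 hx.1]⟩
  have hM' : (0 : ℝ) < M := by positivity
  have h0 : 0 ≤ x * M / b := div_nonneg (mul_nonneg hx.1 hM'.le) hb.le
  have hlt : ⌊x * M / b⌋₊ < M + 1 :=
    Nat.lt_succ_of_le <| Nat.floor_le_of_le <| (div_le_iff₀ hb).2 <| by
      nlinarith [mul_le_mul_of_nonneg_right hx.2 hM'.le]
  refine ⟨⟨⌊x * M / b⌋₊, hlt⟩, ?_⟩
  have hfrac : |x * M / b - ⌊x * M / b⌋₊| ≤ 1 :=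
    abs_le.2 ⟨by linarith [Nat.floor_le h0], by linarith [Nat.lt_floor_add_one (x * M / b)]⟩
  have hscale : x - b * ⌊x * M / b⌋₊ / M = b / M * (x * M / b - ⌊x * M / b⌋₊) := by field_simp
  calc |x - b * ⌊x * M / b⌋₊ / M| = b / M * |x * M / b - ⌊x * M / b⌋₊| := by
        rw [hscale, abs_mul, abs_of_pos (div_pos hb hM')]
    _ ≤ b / M := mul_le_of_le_one_right (by positivity) hfrac

lemma norm_comp_le_supNorm {ι : Type*} [Fintype ι] {f : ℝ → ℝ} {x : ι → ℝ}
    (hf : ContinuousOn f (Set.Icc 0 (2 * π))) (hx : ∀ i, x i ∈ Set.Icc 0 (2 * π)) :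
    ‖fun i => f (x i)‖ ≤ supNorm f :=
  (pi_norm_le_iff_of_nonneg (supNorm_nonneg f)).2 fun i => abs_le_supNorm hf (hx i)

lemma supNorm_le_norm_grid_add {f : ℝ → ℝ} {K : NNReal}
    (hf : LipschitzOnWith K f (Set.Icc 0 (2 * π))) {M : ℕ} (hM : M ≠ 0) :
    supNorm f ≤ ‖fun j : Fin (M + 1) => f (2 * π * j / M)‖ + K * (2 * π / M) := by
  refine supNorm_le fun x hx => ?_
  obtain ⟨j, hj⟩ := exists_abs_sub_mul_div_le hx hM
  have hy := mul_div_mem_Icc two_pi_pos.le (Nat.lt_succ_iff.1 j.2)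
  calc |f x| ≤ |f (2 * π * j / M)| + |f x - f (2 * π * j / M)| := by
        linarith [abs_sub_abs_le_abs_sub (f x) (f (2 * π * j / M))]
    _ ≤ ‖fun j : Fin (M + 1) => f (2 * π * j / M)‖ + K * (2 * π / M) := by
        gcongr
        · exact norm_le_pi_norm (fun j : Fin (M + 1) => f (2 * π * j / M)) j
        · exact (hf.dist_le_mul x hx _ hy).trans (by gcongr; exact hj)

end SupNorm

section MaximalInequalities

variable {Ω ι : Type*} [MeasurableSpace Ω] {μ : Measure Ω} [Fintype ι] {X : ι → Ω → ℝ}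

lemma exp_mul_norm_le_sum [Nonempty ι] (t : ℝ) (x : ι → ℝ) :
    exp (t * ‖x‖) ≤ ∑ i, (exp (t * x i) + exp (t * -x i)) := by
  obtain ⟨i, hi⟩ := Finite.exists_max fun i => ‖x i‖
  have hnorm : ‖x‖ = |x i| :=
    le_antisymm ((pi_norm_le_iff_of_nonempty _).2 hi) (norm_le_pi_norm x i)
  calc exp (t * ‖x‖) ≤ exp |t * x i| := by
        rw [hnorm, abs_mul]
        gcongr
        exact le_abs_self t
    _ ≤ exp (t * x i) + exp (t * -x i) := by simpa using exp_abs_le (t * x i)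
    _ ≤ ∑ i, (exp (t * x i) + exp (t * -x i)) :=
        Finset.single_le_sum (f := fun i => exp (t * x i) + exp (t * -x i))
          (fun _ _ => by positivity) (Finset.mem_univ i)

variable {c : NNReal}

lemma integrable_exp_mul_norm_of_hasSubgaussianMGF [Nonempty ι]
    (hX : ∀ i, HasSubgaussianMGF (X i) c μ) (t : ℝ) :
    Integrable (fun ω => exp (t * ‖fun i => X i ω‖)) μ := by
  have hsum := integrable_finsetSum Finset.univ fun i _ =>
    ((hX i).integrable_exp_mul t).add ((hX i).neg.integrable_exp_mul t)
  refine hsum.mono' ?_ (ae_of_all _ fun ω => ?_)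
  · exact ((aemeasurable_pi_lambda _ fun i => (hX i).aemeasurable).norm.const_mul t
      |>.exp).aestronglyMeasurable
  · rw [norm_eq_abs, abs_exp]
    exact exp_mul_norm_le_sum t fun i => X i ω

lemma integral_exp_mul_norm_le_of_hasSubgaussianMGF [Nonempty ι]
    (hX : ∀ i, HasSubgaussianMGF (X i) c μ) (t : ℝ) :
    ∫ ω, exp (t * ‖fun i => X i ω‖) ∂μ ≤ 2 * Fintype.card ι * exp (c * t ^ 2 / 2) := by
  have hint (i) : Integrable (fun ω => exp (t * X i ω) + exp (t * -X i ω)) μ :=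
    ((hX i).integrable_exp_mul t).add ((hX i).neg.integrable_exp_mul t)
  calc ∫ ω, exp (t * ‖fun i => X i ω‖) ∂μ
      ≤ ∫ ω, ∑ i, (exp (t * X i ω) + exp (t * -X i ω)) ∂μ :=
        integral_mono (integrable_exp_mul_norm_of_hasSubgaussianMGF hX t)
          (integrable_finsetSum _ fun i _ => hint i) fun ω => exp_mul_norm_le_sum t fun i => X i ω
    _ = ∑ i, (mgf (X i) μ t + mgf (-X i) μ t) := by
        rw [integral_finsetSum _ fun i _ => hint i]
        exact Finset.sum_congr rfl fun i _ =>
          integral_add ((hX i).integrable_exp_mul t) ((hX i).neg.integrable_exp_mul t)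
    _ ≤ ∑ _i : ι, (exp (c * t ^ 2 / 2) + exp (c * t ^ 2 / 2)) := by
        gcongr with i
        exacts [(hX i).mgf_le t, (hX i).neg.mgf_le t]
    _ = 2 * Fintype.card ι * exp (c * t ^ 2 / 2) := by
        rw [Finset.sum_const, Finset.card_univ, nsmul_eq_mul]
        ring

lemma integrable_norm_of_hasSubgaussianMGF {d : ι → NNReal}
    (hX : ∀ i, HasSubgaussianMGF (X i) (d i) μ) : Integrable (fun ω => ‖fun i => X i ω‖) μ :=
  (Integrable.of_eval fun i => (hX i).integrable).norm

lemma mul_integral_norm_le_of_hasSubgaussianMGF [IsProbabilityMeasure μ] [Nonempty ι]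
    (hX : ∀ i, HasSubgaussianMGF (X i) c μ) (t : ℝ) :
    t * ∫ ω, ‖fun i => X i ω‖ ∂μ ≤ log (2 * Fintype.card ι) + c * t ^ 2 / 2 := by
  have hjensen : exp (∫ ω, t * ‖fun i => X i ω‖ ∂μ) ≤ ∫ ω, exp (t * ‖fun i => X i ω‖) ∂μ :=
    convexOn_exp.map_integral_le continuous_exp.continuousOn isClosed_univ
      (ae_of_all _ fun _ => Set.mem_univ _)
      ((integrable_norm_of_hasSubgaussianMGF hX).const_mul t)
      (integrable_exp_mul_norm_of_hasSubgaussianMGF hX t)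
  rw [← integral_const_mul, ← log_exp (c * t ^ 2 / 2), ← log_mul (by positivity) (by positivity)]
  exact (le_log_iff_exp_le (by positivity)).2 <|
    hjensen.trans (integral_exp_mul_norm_le_of_hasSubgaussianMGF hX t)

theorem integral_norm_le_sqrt_of_hasSubgaussianMGF [IsProbabilityMeasure μ] [Nonempty ι]
    (hX : ∀ i, HasSubgaussianMGF (X i) c μ) :
    ∫ ω, ‖fun i => X i ω‖ ∂μ ≤ √(2 * c * log (2 * Fintype.card ι)) := by
  rcases eq_or_ne c 0 with rfl | hc
  · have hzero : (fun ω => ‖fun i => X i ω‖) =ᵐ[μ] 0 := by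
      filter_upwards [ae_all_iff.2 fun i => (hX i).ae_eq_zero_of_hasSubgaussianMGF_zero]
        with ω hω
      simp only [hω, Pi.zero_apply]
      exact norm_zero
    simp [integral_congr_ae hzero]
  have hc' : (0 : ℝ) < c := by positivity
  have hlog : 0 < log (2 * Fintype.card ι) := by
    have : (1 : ℝ) ≤ Fintype.card ι := by exact_mod_cast Fintype.card_pos
    exact log_pos (by linarith)
  set R := √(2 * c * log (2 * Fintype.card ι))
  have hR : R ^ 2 = 2 * c * log (2 * Fintype.card ι) := sq_sqrt (by positivity)
  have hR0 : 0 < R := sqrt_pos.2 (by positivity)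
  -- The exponent `t = R / c` minimises `(log (2 * card ι) + c * t ^ 2 / 2) / t`.
  have h := mul_integral_norm_le_of_hasSubgaussianMGF hX (R / c)
  refine le_of_mul_le_mul_left (h.trans_eq ?_) (div_pos hR0 hc')
  field_simp
  linarith

lemma measureReal_norm_le_le_exp (hindep : iIndepFun X μ) (hX : ∀ i, AEMeasurable (X i) μ)
    (r : ℝ) :
    μ.real {ω | ‖fun i => X i ω‖ ≤ r} ≤ exp (-∑ i, μ.real {ω | r < |X i ω|}) := by
  have := hindep.isProbabilityMeasure
  have hset : MeasurableSet {x : ℝ | |x| ≤ r} := measurableSet_le (by fun_prop) (by fun_prop)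
  have hsub : {ω | ‖fun i => X i ω‖ ≤ r} ⊆ ⋂ i ∈ Finset.univ, X i ⁻¹' {x | |x| ≤ r} :=
    fun ω hω => Set.mem_iInter₂.2 fun i _ => (norm_le_pi_norm (fun i => X i ω) i).trans hω
  have hcompl (i) : μ.real (X i ⁻¹' {x | |x| ≤ r}) = 1 - μ.real {ω | r < |X i ω|} := by
    rw [eq_sub_iff_add_eq, ← probReal_univ (μ := μ),
      ← measureReal_add_measureReal_compl₀ ((hX i).nullMeasurableSet_preimage hset)]
    simp only [Set.compl_def, Set.mem_preimage, Set.mem_ofPred_eq, not_le]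
  calc μ.real {ω | ‖fun i => X i ω‖ ≤ r}
      ≤ μ.real (⋂ i ∈ Finset.univ, X i ⁻¹' {x | |x| ≤ r}) := measureReal_mono hsub
    _ = ∏ i, μ.real (X i ⁻¹' {x | |x| ≤ r}) := by
        simp only [measureReal_def, ← ENNReal.toReal_prod]
        rw [hindep.measure_inter_preimage_eq_mul Finset.univ fun _ _ => hset]
    _ ≤ ∏ i, exp (-μ.real {ω | r < |X i ω|}) := by
        gcongr with i
        rw [hcompl i]
        exact one_sub_le_exp_neg _
    _ = exp (-∑ i, μ.real {ω | r < |X i ω|}) := by rw [← exp_sum, Finset.sum_neg_distrib]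

end MaximalInequalities

section GaussianMaximum

/-- The constant `κ` in the Gaussian tail bound `P(Z > t) ≥ κ exp (-t ^ 2)`: the density of `Z`
is at least `κ exp (-t ^ 2)` on `[t, t + 1]`, because `(t + s) ^ 2 / 2 ≤ t ^ 2 + 1` for
`|s| ≤ 1`. -/
noncomputable def gaussianTailConst : ℝ := (√(2 * π))⁻¹ * exp (-1)

lemma gaussianTailConst_pos : 0 < gaussianTailConst := by
  unfold gaussianTailConst
  positivity

lemma gaussianTailConst_mul_exp_le_gaussianPDFReal (m : ℝ) {v : NNReal} (hv : v ≠ 0) (t : ℝ)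
    {x : ℝ} (hx : x ∈ Set.Icc (m + √v * t) (m + √v * (t + 1))) :
    gaussianTailConst * exp (-t ^ 2) / √v ≤ gaussianPDFReal m v x := by
  have hv' : 0 < (v : ℝ) := by positivity
  have hs : 0 < √(v : ℝ) := sqrt_pos.2 hv'
  obtain ⟨s, rfl⟩ : ∃ s, x = m + √v * (t + s) := ⟨(x - m) / √v - t, by field_simp; ring⟩
  have hs0 : 0 ≤ s := by
    have := hx.1
    nlinarith
  have hs1 : s ≤ 1 := by
    have := hx.2
    nlinarith
  have hexponent : -t ^ 2 - 1 ≤ -(√v * (t + s)) ^ 2 / (2 * v) := by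
    have : -(√v * (t + s)) ^ 2 / (2 * v) = -(t + s) ^ 2 / 2 := by
      rw [mul_pow, sq_sqrt hv'.le]
      field_simp
    nlinarith [sq_nonneg (t - s)]
  calc gaussianTailConst * exp (-t ^ 2) / √v = (√(2 * π * v))⁻¹ * exp (-t ^ 2 - 1) := by
        rw [gaussianTailConst, sqrt_mul two_pi_pos.le, sub_eq_add_neg, exp_add]
        field_simp
    _ ≤ gaussianPDFReal m v (m + √v * (t + s)) := by
        rw [gaussianPDFReal, add_sub_cancel_left]
        gcongr

lemma gaussianTailConst_mul_exp_le_gaussianReal_Ioi (m : ℝ) {v : NNReal} (hv : v ≠ 0) (t : ℝ) :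
    gaussianTailConst * exp (-t ^ 2) ≤ (gaussianReal m v).real (Set.Ioi (m + √v * t)) := by
  have hs : 0 < √(v : ℝ) := sqrt_pos.2 (by positivity)
  set I := Set.Ioc (m + √v * t) (m + √v * (t + 1))
  have hvol : volume.real I = √v := by
    rw [Real.volume_real_Ioc_of_le (by nlinarith)]
    ring
  calc gaussianTailConst * exp (-t ^ 2)
      = gaussianTailConst * exp (-t ^ 2) / √v * volume.real I := by
        rw [hvol, div_mul_cancel₀ _ hs.ne']
    _ ≤ ∫ x in I, gaussianPDFReal m v x :=
        setIntegral_ge_of_const_le_real measurableSet_Ioc measure_Ioc_lt_top.ne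
          (fun x hx => gaussianTailConst_mul_exp_le_gaussianPDFReal m hv t
            (Set.Ioc_subset_Icc_self hx))
          (integrable_gaussianPDFReal m v).integrableOn
    _ = (gaussianReal m v).real I := by
        rw [measureReal_def, gaussianReal_apply_eq_integral m hv,
          ENNReal.toReal_ofReal (integral_nonneg fun x => gaussianPDFReal_nonneg m v x)]
    _ ≤ (gaussianReal m v).real (Set.Ioi (m + √v * t)) :=
        measureReal_mono Set.Ioc_subset_Ioi_self

variable {Ω ι : Type*} [MeasurableSpace Ω] {μ : Measure Ω}

lemma hasSubgaussianMGF_of_hasLaw_gaussianReal {Y : Ω → ℝ} {v : NNReal}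
    (hY : HasLaw Y (gaussianReal 0 v) μ) : HasSubgaussianMGF Y v μ where
  integrable_exp_mul t := by
    have h := integrable_exp_mul_gaussianReal (μ := 0) (v := v) t
    rwa [← hY.map_eq, integrable_map_measure (by fun_prop) hY.aemeasurable] at h
  mgf_le t := by
    rw [mgf_gaussianReal hY.map_eq]
    simp

lemma gaussianTailConst_div_le_measureReal_lt_abs {Y : Ω → ℝ} {v : NNReal} (hv : v ≠ 0)
    (hY : HasLaw Y (gaussianReal 0 v) μ) {k : ℝ} (hk : 1 ≤ k) :
    gaussianTailConst / k ≤ μ.real {ω | √(v * log k) < |Y ω|} := by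
  calc gaussianTailConst / k = gaussianTailConst * exp (-√(log k) ^ 2) := by
        rw [sq_sqrt (log_nonneg hk), exp_neg, exp_log (by positivity), div_eq_mul_inv]
    _ ≤ (gaussianReal 0 v).real (Set.Ioi (0 + √v * √(log k))) :=
        gaussianTailConst_mul_exp_le_gaussianReal_Ioi 0 hv _
    _ ≤ (gaussianReal 0 v).real {y | √(v * log k) < |y|} := by
        rw [zero_add, ← sqrt_mul v.coe_nonneg]
        exact measureReal_mono fun y hy => lt_of_lt_of_le hy (le_abs_self y)
    _ = μ.real {ω | √(v * log k) < |Y ω|} :=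
        (hY.measureReal_eq (measurableSet_lt (by fun_prop) (by fun_prop))).symm

theorem mul_sqrt_log_card_le_integral_norm_gaussian [Fintype ι] [Nonempty ι] {X : ι → Ω → ℝ}
    {v : NNReal} (hindep : iIndepFun X μ) (hX : ∀ i, HasLaw (X i) (gaussianReal 0 v) μ) :
    (1 - exp (-gaussianTailConst)) * √(v * log (Fintype.card ι)) ≤
      ∫ ω, ‖fun i => X i ω‖ ∂μ := by
  rcases eq_or_ne v 0 with rfl | hv
  · simpa using integral_nonneg fun ω => norm_nonneg fun i => X i ω
  have := hindep.isProbabilityMeasure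
  have hk : (1 : ℝ) ≤ Fintype.card ι := by exact_mod_cast Fintype.card_pos
  set r := √(v * log (Fintype.card ι))
  have hsum : gaussianTailConst ≤ ∑ i, μ.real {ω | r < |X i ω|} := by
    calc gaussianTailConst = ∑ _i : ι, gaussianTailConst / Fintype.card ι := by
          rw [Finset.sum_const, Finset.card_univ, nsmul_eq_mul, mul_div_cancel₀ _ (by positivity)]
      _ ≤ ∑ i, μ.real {ω | r < |X i ω|} :=
          Finset.sum_le_sum fun i _ => gaussianTailConst_div_le_measureReal_lt_abs hv (hX i) hk
  have hint : Integrable (fun ω => ‖fun i => X i ω‖) μ :=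
    integrable_norm_of_hasSubgaussianMGF fun i => hasSubgaussianMGF_of_hasLaw_gaussianReal (hX i)
  have hmeas : NullMeasurableSet {ω | ‖fun i => X i ω‖ ≤ r} μ :=
    nullMeasurableSet_le hint.aemeasurable aemeasurable_const
  have hbelow : μ.real {ω | ‖fun i => X i ω‖ ≤ r} ≤ exp (-gaussianTailConst) :=
    (measureReal_norm_le_le_exp hindep (fun i => (hX i).aemeasurable) r).trans (by gcongr)
  calc (1 - exp (-gaussianTailConst)) * r
      ≤ μ.real {ω | ‖fun i => X i ω‖ ≤ r}ᶜ * r := by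
        rw [probReal_compl_eq_one_sub₀ hmeas]
        gcongr
    _ ≤ r * μ.real {ω | r ≤ ‖fun i => X i ω‖} := by
        rw [mul_comm]
        exact mul_le_mul_of_nonneg_left
          (measureReal_mono fun ω (hω : ¬‖fun i => X i ω‖ ≤ r) => (not_le.1 hω).le) (sqrt_nonneg _)
    _ ≤ ∫ ω, ‖fun i => X i ω‖ ∂μ :=
        mul_meas_ge_le_integral_of_nonneg (ae_of_all _ fun ω => norm_nonneg _) hint r

end GaussianMaximum

section GaussianLinearForms

open scoped Matrix

variable {ι : Type*} [Fintype ι]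

lemma hasLaw_eval_gaussianReal (i : ι) :
    HasLaw (fun a : ι → ℝ => a i) (gaussianReal 0 1) (Measure.pi fun _ => gaussianReal 0 1) :=
  (measurePreserving_eval (fun _ : ι => gaussianReal 0 1) i).hasLaw

lemma hasSubgaussianMGF_eval (i : ι) :
    HasSubgaussianMGF (fun a : ι → ℝ => a i) 1 (Measure.pi fun _ => gaussianReal 0 1) :=
  hasSubgaussianMGF_of_hasLaw_gaussianReal (hasLaw_eval_gaussianReal i)

lemma hasGaussianLaw_eval (i : ι) :
    HasGaussianLaw (fun a : ι → ℝ => a i) (Measure.pi fun _ => gaussianReal 0 1) where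
  isGaussian_map := by
    rw [(hasLaw_eval_gaussianReal i).map_eq]
    infer_instance

lemma iIndepFun_eval_gaussianReal :
    iIndepFun (fun (i : ι) (a : ι → ℝ) => a i) (Measure.pi fun _ => gaussianReal 0 1) :=
  iIndepFun_pi (X := fun _ => id) fun _ => aemeasurable_id

lemma hasGaussianLaw_dotProduct {κ : Type*} [Finite κ] (u : κ → ι → ℝ) :
    HasGaussianLaw (fun (a : ι → ℝ) k => a ⬝ᵥ u k) (Measure.pi fun _ => gaussianReal 0 1) := by
  have := Fintype.ofFinite κ
  let L : (ι → ℝ) →L[ℝ] κ → ℝ :=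
    ContinuousLinearMap.pi fun k => ∑ i, u k i • ContinuousLinearMap.proj i
  have hL (a : ι → ℝ) : L a = fun k => a ⬝ᵥ u k := by
    ext k
    simp [L, dotProduct, mul_comm]
  simpa only [hL] using
    (iIndepFun_eval_gaussianReal.hasGaussianLaw hasGaussianLaw_eval).map_fun L

lemma integral_dotProduct (u : ι → ℝ) :
    ∫ a, a ⬝ᵥ u ∂(Measure.pi fun _ => gaussianReal 0 1) = 0 := by
  simp only [dotProduct]
  rw [integral_finsetSum _ fun i _ => (hasGaussianLaw_eval i).integrable.mul_const _]
  simp [integral_mul_const, (hasLaw_eval_gaussianReal _).integral_eq]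

lemma covariance_eval [DecidableEq ι] (i j : ι) :
    cov[fun a => a i, fun a => a j; Measure.pi fun _ => gaussianReal 0 1] =
      if i = j then 1 else 0 := by
  split_ifs with h
  · subst h
    rw [covariance_self (measurable_pi_apply i).aemeasurable,
      (hasLaw_eval_gaussianReal i).variance_eq, variance_id_gaussianReal]
    rfl
  · exact (iIndepFun_eval_gaussianReal.indepFun h).covariance_eq_zero
      (hasGaussianLaw_eval i).memLp_two (hasGaussianLaw_eval j).memLp_two

lemma covariance_dotProduct (u v : ι → ℝ) :
    cov[fun a => a ⬝ᵥ u, fun a => a ⬝ᵥ v; Measure.pi fun _ => gaussianReal 0 1] = u ⬝ᵥ v := by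
  classical
  simp only [dotProduct]
  rw [covariance_fun_sum_fun_sum (fun i => (hasGaussianLaw_eval i).memLp_two.mul_const _)
    (fun i => (hasGaussianLaw_eval i).memLp_two.mul_const _)]
  simp only [covariance_mul_const_left, covariance_mul_const_right, covariance_eval]
  simp [mul_comm]

lemma hasLaw_dotProduct_gaussianReal (u : ι → ℝ) :
    HasLaw (fun a => a ⬝ᵥ u) (gaussianReal 0 (u ⬝ᵥ u).toNNReal)
      (Measure.pi fun _ => gaussianReal 0 1) where
  map_eq := by
    have h := (hasGaussianLaw_dotProduct fun _ : Unit => u).eval ()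
    rw [h.map_eq_gaussianReal, integral_dotProduct, ← covariance_self h.aemeasurable,
      covariance_dotProduct]

lemma iIndepFun_dotProduct_of_orthogonal {κ : Type*} [Finite κ] {u : κ → ι → ℝ}
    (hu : Pairwise fun j k => u j ⬝ᵥ u k = 0) :
    iIndepFun (fun k (a : ι → ℝ) => a ⬝ᵥ u k) (Measure.pi fun _ => gaussianReal 0 1) :=
  have := Fintype.ofFinite κ
  (hasGaussianLaw_dotProduct u).iIndepFun_of_covariance_eq_zero fun j k hjk => by
    rw [covariance_dotProduct, hu hjk]

end GaussianLinearForms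

section TrigBasis

/-- The orthonormal trigonometric system `1, √2 cos x, √2 sin x, √2 cos 2x, √2 sin 2x, …`, with
`√2 cos kx` and `√2 sin kx` at the indices `2k - 1` and `2k`, as in `trigPoly`. -/
noncomputable def trigBasis : ℕ → ℝ → ℝ
  | 0, _ => 1
  | i + 1, x => √2 * (if Even i then cos else sin) (((i / 2 : ℕ) + 1 : ℝ) * x)

lemma trigBasis_zero (x : ℝ) : trigBasis 0 x = 1 := rfl

lemma trigBasis_two_mul_add_one (k : ℕ) (x : ℝ) :
    trigBasis (2 * k + 1) x = √2 * cos ((k + 1 : ℝ) * x) := by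
  simp [trigBasis]

lemma trigBasis_two_mul_add_two (k : ℕ) (x : ℝ) :
    trigBasis (2 * k + 2) x = √2 * sin ((k + 1 : ℝ) * x) := by
  have hdiv : (2 * k + 1) / 2 = k := by omega
  simp [trigBasis, hdiv]

lemma lipschitzWith_trigBasis (i : ℕ) : LipschitzWith (i + 1) (trigBasis i) := by
  rcases i with _ | i
  · exact (LipschitzWith.const' 1).weaken zero_le
  have hf : LipschitzWith 1 (if Even i then cos else sin) := by
    split_ifs
    exacts [lipschitzWith_cos, lipschitzWith_sin]
  have hfreq : √2 * ((i / 2 : ℕ) + 1) ≤ i + 1 + 1 := by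
    have hsqrt : √2 ≤ 2 := by rw [sqrt_le_left zero_le_two]; norm_num
    have hdiv : ((i / 2 : ℕ) : ℝ) ≤ i / 2 := Nat.cast_div_le
    nlinarith
  refine LipschitzWith.of_dist_le_mul fun x y => ?_
  push_cast
  set w : ℝ := (i / 2 : ℕ) + 1
  calc dist (trigBasis (i + 1) x) (trigBasis (i + 1) y)
      = √2 * dist ((if Even i then cos else sin) (w * x))
          ((if Even i then cos else sin) (w * y)) := by
        rw [dist_eq, dist_eq, trigBasis, trigBasis, ← mul_sub, abs_mul,
          abs_of_nonneg (sqrt_nonneg 2)]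
    _ ≤ √2 * dist (w * x) (w * y) := by
        gcongr
        simpa using hf.dist_le_mul (w * x) (w * y)
    _ = √2 * w * dist x y := by
        rw [dist_eq, dist_eq, ← mul_sub, abs_mul, abs_of_nonneg (by positivity : 0 ≤ w), mul_assoc]
    _ ≤ (i + 1 + 1) * dist x y := by gcongr

lemma sum_fin_two_mul_add_one {M : Type*} [AddCommMonoid M] (n : ℕ) (f : Fin (2 * n + 1) → M) :
    ∑ i, f i = f ⟨0, by omega⟩ + ∑ k : Fin n,
      (f ⟨2 * k + 1, by omega⟩ + f ⟨2 * k + 2, by omega⟩) := by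
  induction n with
  | zero => simp
  | succ n ih =>
    calc ∑ i, f i
        = ∑ i : Fin (2 * n + 1), f ⟨i, by omega⟩ + f ⟨2 * n + 1, by omega⟩ +
            f ⟨2 * n + 2, by omega⟩ := by
          rw [Fin.sum_univ_castSucc]
          exact congrArg (· + _) (Fin.sum_univ_castSucc (n := 2 * n + 1) _)
      _ = _ := by
          rw [ih, Fin.sum_univ_castSucc (n := n)]
          simp only [add_assoc, Fin.val_castSucc, Fin.val_last]

open scoped Matrix

lemma trigPoly_eq_dotProduct (n : ℕ) (a : Fin (2 * n + 1) → ℝ) (x : ℝ) :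
    trigPoly n a x = a ⬝ᵥ fun i => trigBasis i x := by
  rw [dotProduct, sum_fin_two_mul_add_one, trigPoly]
  simp only [trigBasis_zero, trigBasis_two_mul_add_one, trigBasis_two_mul_add_two, mul_one,
    mul_assoc]

lemma trigBasis_dotProduct (n : ℕ) (x y : ℝ) :
    ((fun i : Fin (2 * n + 1) => trigBasis i x) ⬝ᵥ fun i => trigBasis i y) =
      1 + 2 * ∑ k ∈ Finset.range n, cos ((k + 1) * (x - y)) := by
  have htwo : √2 * √2 = 2 := mul_self_sqrt zero_le_two
  rw [dotProduct, sum_fin_two_mul_add_one, ← Fin.sum_univ_eq_sum_range, Finset.mul_sum]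
  simp only [trigBasis_zero, trigBasis_two_mul_add_one, trigBasis_two_mul_add_two, mul_one]
  congr 1
  refine Finset.sum_congr rfl fun k _ => ?_
  rw [mul_sub, cos_sub]
  linear_combination (cos ((k + 1) * x) * cos ((k + 1) * y) +
    sin ((k + 1) * x) * sin ((k + 1) * y)) * htwo

lemma trigBasis_dotProduct_self (n : ℕ) (x : ℝ) :
    ((fun i : Fin (2 * n + 1) => trigBasis i x) ⬝ᵥ fun i => trigBasis i x) = 2 * n + 1 := by
  rw [trigBasis_dotProduct]
  simp [add_comm]

lemma sin_half_mul_dirichletKernel (n : ℕ) (t : ℝ) :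
    sin (t / 2) * (1 + 2 * ∑ k ∈ Finset.range n, cos ((k + 1) * t)) =
      sin ((2 * n + 1) * (t / 2)) := by
  induction n with
  | zero => simp
  | succ n ih =>
    have hplus : (2 * (n + 1) + 1) * (t / 2) = (n + 1) * t + t / 2 := by ring
    have hminus : (2 * n + 1) * (t / 2) = (n + 1) * t - t / 2 := by ring
    rw [Finset.sum_range_succ, mul_add 2, ← add_assoc, mul_add (sin (t / 2)), ih]
    push_cast
    rw [hplus, hminus, sin_add, sin_sub]
    ring

lemma dirichletKernel_eq_zero {n : ℕ} {m : ℤ} (hm : ¬(2 * n + 1 : ℤ) ∣ m) :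
    1 + 2 * ∑ k ∈ Finset.range n, cos ((k + 1) * (2 * π * m / (2 * n + 1))) = 0 := by
  have hN : (2 * n + 1 : ℝ) ≠ 0 := by positivity
  have hzero := sin_half_mul_dirichletKernel n (2 * π * m / (2 * n + 1))
  have harg : (2 * n + 1) * (2 * π * m / (2 * n + 1) / 2) = m * π := by field_simp
  rw [harg, sin_int_mul_pi] at hzero
  refine (mul_eq_zero.1 hzero).resolve_left fun hsin => ?_
  obtain ⟨q, hq⟩ := sin_eq_zero_iff.1 hsin
  have hmq : (m : ℝ) = (2 * n + 1) * q := by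
    field_simp at hq
    linarith
  exact hm ⟨q, by exact_mod_cast hmq⟩

lemma trigBasis_nodes_orthogonal (n : ℕ) :
    Pairwise fun j k : Fin (2 * n + 1) =>
      ((fun i : Fin (2 * n + 1) => trigBasis i (2 * π * j / (2 * n + 1))) ⬝ᵥ
        fun i => trigBasis i (2 * π * k / (2 * n + 1))) = 0 := by
  intro j k hjk
  have hdvd : ¬(2 * n + 1 : ℤ) ∣ (j - k : ℤ) := fun hdvd => by
    have := Int.eq_zero_of_abs_lt_dvd hdvd (abs_lt.2 ⟨by omega, by omega⟩)
    omega
  have hsub : 2 * π * j / (2 * n + 1) - 2 * π * k / (2 * n + 1) =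
      2 * π * ((j - k : ℤ) : ℝ) / (2 * n + 1) := by
    push_cast
    ring
  rw [trigBasis_dotProduct, hsub, dirichletKernel_eq_zero hdvd]

lemma continuous_trigPoly_coeff (n : ℕ) (x : ℝ) : Continuous fun a => trigPoly n a x := by
  unfold trigPoly
  fun_prop

lemma lipschitzWith_trigPoly (n : ℕ) (a : Fin (2 * n + 1) → ℝ) :
    LipschitzWith ((2 * n + 1) ^ 2 * ‖a‖₊) (trigPoly n a) := by
  refine LipschitzWith.of_dist_le_mul fun x y => ?_
  have hterm (i : Fin (2 * n + 1)) :
      |a i * (trigBasis i x - trigBasis i y)| ≤ ‖a‖ * ((2 * n + 1) * dist x y) := by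
    have hi : (i + 1 : ℝ) ≤ 2 * n + 1 := by exact_mod_cast i.2
    rw [abs_mul]
    gcongr
    · exact norm_le_pi_norm a i
    · exact ((lipschitzWith_trigBasis i).dist_le_mul x y).trans (by push_cast; gcongr)
  calc dist (trigPoly n a x) (trigPoly n a y)
      = |∑ i, a i * (trigBasis i x - trigBasis i y)| := by
        simp only [dist_eq, trigPoly_eq_dotProduct, dotProduct, mul_sub, Finset.sum_sub_distrib]
    _ ≤ ∑ _i : Fin (2 * n + 1), ‖a‖ * ((2 * n + 1) * dist x y) :=
        (Finset.abs_sum_le_sum_abs _ _).trans (Finset.sum_le_sum fun i _ => hterm i)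
    _ = ((2 * n + 1) ^ 2 * ‖a‖₊ : NNReal) * dist x y := by
        rw [Finset.sum_const, Finset.card_univ, Fintype.card_fin, nsmul_eq_mul]
        push_cast
        ring

end TrigBasis

section ExpectedSupNorm

variable (n : ℕ)

lemma hasLaw_trigPoly (x : ℝ) :
    HasLaw (fun a => trigPoly n a x) (gaussianReal 0 (2 * n + 1))
      (Measure.pi fun _ => gaussianReal 0 1) := by
  have hvar : (2 * n + 1 : ℝ).toNNReal = 2 * n + 1 := by exact_mod_cast Real.toNNReal_natCast _
  have h := hasLaw_dotProduct_gaussianReal fun i : Fin (2 * n + 1) => trigBasis i x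
  simpa only [trigPoly_eq_dotProduct, trigBasis_dotProduct_self, hvar] using h

lemma hasSubgaussianMGF_trigPoly (x : ℝ) :
    HasSubgaussianMGF (fun a => trigPoly n a x) (2 * n + 1)
      (Measure.pi fun _ => gaussianReal 0 1) :=
  hasSubgaussianMGF_of_hasLaw_gaussianReal (hasLaw_trigPoly n x)

lemma iIndepFun_trigPoly_nodes :
    iIndepFun (fun (j : Fin (2 * n + 1)) a => trigPoly n a (2 * π * j / (2 * n + 1)))
      (Measure.pi fun _ => gaussianReal 0 1) := by
  simpa only [trigPoly_eq_dotProduct] using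
    iIndepFun_dotProduct_of_orthogonal (trigBasis_nodes_orthogonal n)

lemma supNorm_trigPoly_le_norm_grid_add (a : Fin (2 * n + 1) → ℝ) {M : ℕ} (hM : M ≠ 0) :
    supNorm (trigPoly n a) ≤
      ‖fun j : Fin (M + 1) => trigPoly n a (2 * π * j / M)‖ +
        (2 * n + 1) ^ 2 * (2 * π / M) * ‖a‖ := by
  refine (supNorm_le_norm_grid_add (lipschitzWith_trigPoly n a).lipschitzOnWith hM).trans_eq ?_
  push_cast
  ring

lemma measurable_supNorm_trigPoly : Measurable fun a => supNorm (trigPoly n a) :=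
  (lowerSemicontinuous_supNorm (fun a => (lipschitzWith_trigPoly n a).continuous.continuousOn)
    fun x _ => continuous_trigPoly_coeff n x).measurable

lemma integrable_norm_trigPoly {κ : Type*} [Fintype κ] (x : κ → ℝ) :
    Integrable (fun a => ‖fun k => trigPoly n a (x k)‖) (Measure.pi fun _ => gaussianReal 0 1) :=
  integrable_norm_of_hasSubgaussianMGF fun k => hasSubgaussianMGF_trigPoly n (x k)

lemma integrable_norm_grid_add (M : ℕ) :
    Integrable (fun a => ‖fun j : Fin (M + 1) => trigPoly n a (2 * π * j / M)‖ +
      (2 * n + 1) ^ 2 * (2 * π / M) * ‖a‖) (Measure.pi fun _ => gaussianReal 0 1) :=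
  (integrable_norm_trigPoly n _).add
    ((integrable_norm_of_hasSubgaussianMGF hasSubgaussianMGF_eval).const_mul _)

lemma integrable_supNorm_trigPoly :
    Integrable (fun a => supNorm (trigPoly n a)) (Measure.pi fun _ => gaussianReal 0 1) := by
  refine (integrable_norm_grid_add n 1).mono'
    (measurable_supNorm_trigPoly n).aestronglyMeasurable (ae_of_all _ fun a => ?_)
  rw [norm_eq_abs, abs_of_nonneg (supNorm_nonneg _)]
  exact supNorm_trigPoly_le_norm_grid_add n a one_ne_zero

theorem mul_sqrt_le_integral_supNorm_trigPoly :
    (1 - exp (-gaussianTailConst)) * √((2 * n + 1) * log (2 * n + 1)) ≤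
      ∫ a, supNorm (trigPoly n a) ∂(Measure.pi fun _ => gaussianReal 0 1) := by
  have hnode (j : Fin (2 * n + 1)) : 2 * π * j / (2 * n + 1) ∈ Set.Icc 0 (2 * π) := by
    exact_mod_cast mul_div_mem_Icc two_pi_pos.le j.2.le
  have hnodes := mul_sqrt_log_card_le_integral_norm_gaussian (iIndepFun_trigPoly_nodes n)
    fun j => hasLaw_trigPoly n _
  rw [Fintype.card_fin] at hnodes
  push_cast at hnodes
  exact hnodes.trans <| integral_mono (integrable_norm_trigPoly n _)
    (integrable_supNorm_trigPoly n) fun a =>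
      norm_comp_le_supNorm (lipschitzWith_trigPoly n a).continuous.continuousOn hnode

lemma integral_supNorm_trigPoly_le_grid {M : ℕ} (hM : M ≠ 0) :
    ∫ a, supNorm (trigPoly n a) ∂(Measure.pi fun _ => gaussianReal 0 1) ≤
      √(2 * (2 * n + 1) * log (2 * (M + 1))) +
        (2 * n + 1) ^ 2 * (2 * π / M) * √(2 * log (2 * (2 * n + 1))) := by
  have hgrid := integral_norm_le_sqrt_of_hasSubgaussianMGF
    fun j : Fin (M + 1) => hasSubgaussianMGF_trigPoly n (2 * π * j / M)
  have hcoeff := integral_norm_le_sqrt_of_hasSubgaussianMGF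
    (hasSubgaussianMGF_eval (ι := Fin (2 * n + 1)))
  rw [Fintype.card_fin] at hgrid hcoeff
  push_cast at hgrid hcoeff
  rw [mul_one] at hcoeff
  calc ∫ a, supNorm (trigPoly n a) ∂(Measure.pi fun _ => gaussianReal 0 1)
      ≤ ∫ a, (‖fun j : Fin (M + 1) => trigPoly n a (2 * π * j / M)‖ +
          (2 * n + 1) ^ 2 * (2 * π / M) * ‖a‖) ∂(Measure.pi fun _ => gaussianReal 0 1) :=
        integral_mono (integrable_supNorm_trigPoly n) (integrable_norm_grid_add n M)
          fun a => supNorm_trigPoly_le_norm_grid_add n a hM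
    _ = ∫ a, ‖fun j : Fin (M + 1) => trigPoly n a (2 * π * j / M)‖
            ∂(Measure.pi fun _ => gaussianReal 0 1) +
          (2 * n + 1) ^ 2 * (2 * π / M) * ∫ a, ‖a‖ ∂(Measure.pi fun _ => gaussianReal 0 1) := by
        rw [integral_add (integrable_norm_trigPoly n _) ((integrable_norm_of_hasSubgaussianMGF
          hasSubgaussianMGF_eval).const_mul _), integral_const_mul]
    _ ≤ _ := by gcongr

lemma log_two_mul_le {N : ℝ} (hN : 2 ≤ N) : log (2 * N) ≤ 2 * log N := by
  calc log (2 * N) ≤ log (N ^ 2) := log_le_log (by positivity) (by nlinarith)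
    _ = 2 * log N := by exact_mod_cast log_pow N 2

lemma log_two_mul_sq_add_one_le {N : ℝ} (hN : 2 ≤ N) : log (2 * (N ^ 2 + 1)) ≤ 4 * log N := by
  calc log (2 * (N ^ 2 + 1)) ≤ log (N ^ 4) :=
        log_le_log (by positivity) (by nlinarith [pow_le_pow_left₀ zero_le_two hN 2])
    _ = 4 * log N := by exact_mod_cast log_pow N 4

theorem integral_supNorm_trigPoly_le_mul_sqrt (hn : 3 ≤ 2 * n + 1) :
    ∫ a, supNorm (trigPoly n a) ∂(Measure.pi fun _ => gaussianReal 0 1) ≤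
      (3 + 4 * π) * √((2 * n + 1) * log (2 * n + 1)) := by
  have hbound := integral_supNorm_trigPoly_le_grid n (M := (2 * n + 1) ^ 2) (by positivity)
  have hN : (3 : ℝ) ≤ 2 * n + 1 := by exact_mod_cast hn
  push_cast at hbound
  set N : ℝ := 2 * n + 1
  have hlog : 0 ≤ log N := log_nonneg (by linarith)
  have hgrid : √(2 * N * log (2 * (N ^ 2 + 1))) ≤ 3 * √(N * log N) := by
    refine sqrt_le_iff.2 ⟨by positivity, ?_⟩
    rw [mul_pow, sq_sqrt (by positivity)]
    nlinarith [log_two_mul_sq_add_one_le (by linarith : 2 ≤ N)]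
  have hcoeff : √(2 * log (2 * N)) ≤ 2 * √(N * log N) := by
    refine sqrt_le_iff.2 ⟨by positivity, ?_⟩
    rw [mul_pow, sq_sqrt (by positivity)]
    nlinarith [log_two_mul_le (by linarith : 2 ≤ N)]
  calc ∫ a, supNorm (trigPoly n a) ∂(Measure.pi fun _ => gaussianReal 0 1)
      ≤ √(2 * N * log (2 * (N ^ 2 + 1))) + N ^ 2 * (2 * π / N ^ 2) * √(2 * log (2 * N)) := hbound
    _ ≤ 3 * √(N * log N) + 2 * π * (2 * √(N * log N)) := by
        rw [mul_div_cancel₀ _ (by positivity)]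
        gcongr
    _ = (3 + 4 * π) * √(N * log N) := by ring

end ExpectedSupNorm

/-- `E[‖T_a‖_∞] ≍ √(N log N)` for `N = 2n+1 ≥ 3`. -/
theorem expected_sup_norm_trig :
    ∃ c C : ℝ, 0 < c ∧ 0 < C ∧ ∀ n : ℕ, 3 ≤ 2 * n + 1 →
      c * Real.sqrt ((2 * n + 1 : ℝ) * Real.log (2 * n + 1 : ℝ)) ≤
          (∫ a : Fin (2 * n + 1) → ℝ, supNorm (trigPoly n a)
            ∂(Measure.pi fun _ => gaussianReal 0 1)) ∧
        (∫ a : Fin (2 * n + 1) → ℝ, supNorm (trigPoly n a)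
            ∂(Measure.pi fun _ => gaussianReal 0 1)) ≤
          C * Real.sqrt ((2 * n + 1 : ℝ) * Real.log (2 * n + 1 : ℝ)) := by
  have hc : 0 < 1 - exp (-gaussianTailConst) :=
    sub_pos.2 (exp_lt_one_iff.2 (neg_neg_of_pos gaussianTailConst_pos))
  exact ⟨1 - exp (-gaussianTailConst), 3 + 4 * π, hc, by positivity, fun n hn =>
    ⟨mul_sqrt_le_integral_supNorm_trigPoly n, integral_supNorm_trigPoly_le_mul_sqrt n hn⟩⟩
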